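/- Let n ≥ 2 and let 𝔹 be the open unit ball in ℝⁿ. For x ∈ 𝔹 with r = |x|, let 𝒯_n(x) be the smallest constant such that |div u(x)| ≤ 𝒯_n(x)·‖g‖_{[L^∞(S^{n−1})]^n} for every vector field u that is the Poisson integral over S^{n−1} of g ∈ [L^∞(S^{n−1})]^n. Then 𝒯_n(x) = [2^{n−1} ω_{n−1} / (ω_n (1+r)^{n−1} (1−r))] ∫₀^{π/2} [ (n−(n−2)r)² + 4 n(n−2) r cos²θ ]^{1/2} · sin^{n−2}θ / [1 + ((1−r)/(1+r))² tan²θ]^{(n−2)/2} dθ. In particular 𝒯_2(x) = 2/(1−r²) and 𝒯_3(x) = (1/(1−r²)) ( 2 + ((3−r²)/(2√3 r)) ln((√3+r)/(√3−r)) ). -/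

import Mathlib

open MeasureTheory Real Filter Metric
open scoped Real RealInnerProductSpace

noncomputable section

/-- `Eu n` is the Euclidean space `ℝⁿ`. -/
abbrev Eu (n : ℕ) := EuclideanSpace ℝ (Fin n)

/-- `ω_n`: the surface area of the unit sphere `S^{n-1}` in `ℝⁿ`,
given by the classical formula `2 π^{n/2} / Γ(n/2)`. -/
def sphereArea (n : ℕ) : ℝ := 2 * π ^ ((n : ℝ) / 2) / Real.Gamma ((n : ℝ) / 2)

/-- The Poisson integral `u(x) = (1/ωₙ) ∫_{S^{n-1}} ((1-|x|²)/|y-x|ⁿ) g(y) dσ_y` of a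
vector-valued boundary function `g : S^{n-1} → ℝ^m`. -/
def poissonBallV {n m : ℕ} (g : Metric.sphere (0 : Eu n) 1 → Eu m) (x : Eu n) : Eu m :=
  (1 / sphereArea n) • ∫ y : Metric.sphere (0 : Eu n) 1,
    ((1 - ‖x‖ ^ 2) / ‖(y : Eu n) - x‖ ^ n) • g y ∂(volume.toSphere)

/-- The divergence `div u(x) = ∑ⱼ ∂uⱼ/∂xⱼ (x)` of a vector field `u : ℝⁿ → ℝⁿ`. -/
def divg {n : ℕ} (u : Eu n → Eu n) (x : Eu n) : ℝ :=
  ∑ j, fderiv ℝ (fun y => u y j) x (EuclideanSpace.single j 1)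

/-- The claimed value of the sharp coefficient `𝒯_n(x)` (with `r = |x|`). -/
def Tcoef (n : ℕ) (r : ℝ) : ℝ :=
  (2 ^ (n - 1) * sphereArea (n - 1) / (sphereArea n * (1 + r) ^ (n - 1) * (1 - r))) *
    ∫ θ in (0:ℝ)..(π / 2),
      Real.sqrt (((n : ℝ) - ((n : ℝ) - 2) * r) ^ 2 +
          4 * (n : ℝ) * ((n : ℝ) - 2) * r * Real.cos θ ^ 2) *
        Real.sin θ ^ (n - 2) /
        (1 + ((1 - r) / (1 + r)) ^ 2 * Real.tan θ ^ 2) ^ (((n : ℝ) - 2) / 2)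

/-!
Differentiating under the integral sign, `div u(x) = ∫ ⟪ω_n⁻¹ ∇ₓP(x, y), g(y)⟫ dσ_y` with
`P(x, y) = (1 - |x|²) / |y - x|ⁿ`. By the duality of `L¹` and `L^∞` the sharp constant is the
`L¹` norm `ω_n⁻¹ ∫ |∇ₓP| dσ`, attained at `g = ∇ₓP / |∇ₓP|`.

Since `|∇ₓP|` depends on `y` only through its angle `φ` with `x`, the integral reduces to one over
`0 < φ < π` with weight `ω_{n-1} sin^{n-2} φ`. In terms of the opposite chord
`v = (1 - r²) / |y - x|`, the other segment into which `x` divides the chord of the sphere through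
`y`, one has `|y - x|ⁿ |∇ₓP| = √(4r² + 2n(1 - r²) + n(n - 2)v²)`, and the substitution
`tan (φ/2) = (1 - r)/(1 + r) tan θ` turns `v` into `√((1 + r)² cos² θ + (1 - r)² sin² θ)`, which
is the stated formula. For `n = 3` the factor `sin θ cos θ / v` is a multiple of `dv/dθ`, leaving an
elementary integral of `√(a + b v²)`.
-/

section PolarCoordinates

open Set Module

section NormedSpace

variable {E : Type*} [NormedAddCommGroup E] [NormedSpace ℝ E] [FiniteDimensional ℝ E]
  [Nontrivial E] [MeasurableSpace E] [BorelSpace E] (μ : Measure E) [μ.IsAddHaarMeasure]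

theorem lintegral_eq_lintegral_sphere_lintegral_Ioi {F : E → ENNReal} (hF : Measurable F) :
    ∫⁻ y, F y ∂μ = ∫⁻ s : sphere (0 : E) 1, ∫⁻ t in Ioi (0 : ℝ),
      ENNReal.ofReal (t ^ (finrank ℝ E - 1)) * F (t • (s : E)) ∂volume ∂μ.toSphere := by
  have hF_prod : Measurable fun p : sphere (0 : E) 1 × Ioi (0 : ℝ) => F (p.2.1 • (p.1 : E)) := by
    fun_prop
  calc
    ∫⁻ y, F y ∂μ = ∫⁻ y : ({0}ᶜ : Set E), F y ∂μ.comap (↑) := by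
      rw [lintegral_subtype_comap (measurableSet_singleton _).compl,
        restrict_compl_singleton]
    _ = ∫⁻ p : sphere (0 : E) 1 × Ioi (0 : ℝ), F (p.2.1 • (p.1 : E))
          ∂μ.toSphere.prod (.volumeIoiPow (finrank ℝ E - 1)) := by
      rw [← μ.measurePreserving_homeomorphUnitSphereProd.lintegral_comp hF_prod]
      refine lintegral_congr fun y => congrArg F ?_
      exact congrArg Subtype.val ((homeomorphUnitSphereProd E).symm_apply_apply y).symm
    _ = ∫⁻ s : sphere (0 : E) 1, ∫⁻ t : Ioi (0 : ℝ), F (t.1 • (s : E))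
          ∂.volumeIoiPow (finrank ℝ E - 1) ∂μ.toSphere :=
      lintegral_prod _ hF_prod.aemeasurable
    _ = _ := by
      refine lintegral_congr fun s => ?_
      rw [Measure.volumeIoiPow, lintegral_withDensity_eq_lintegral_mul _ (by fun_prop)
        (by fun_prop), ← lintegral_subtype_comap measurableSet_Ioi]
      rfl

end NormedSpace

variable {E : Type*} [NormedAddCommGroup E] [InnerProductSpace ℝ E] [FiniteDimensional ℝ E]
  [MeasurableSpace E] [BorelSpace E]

theorem toSphere_volume_univ [Nontrivial E] :
    (volume : Measure E).toSphere univ = ENNReal.ofReal (sphereArea (finrank ℝ E)) := by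
  have hd : (finrank ℝ E : ℝ) ≠ 0 := Nat.cast_ne_zero.2 finrank_pos.ne'
  have hpow : √π ^ finrank ℝ E = π ^ ((finrank ℝ E : ℝ) / 2) := by
    rw [Real.sqrt_eq_rpow, ← Real.rpow_mul_natCast pi_pos.le, one_div_mul_eq_div]
  rw [Measure.toSphere_apply_univ, InnerProductSpace.volume_ball, ENNReal.ofReal_one, one_pow,
    one_mul, ← ENNReal.ofReal_natCast, ← ENNReal.ofReal_mul (by positivity), sphereArea,
    Real.Gamma_add_one (div_ne_zero hd two_ne_zero), hpow]
  congr 1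
  field_simp

theorem lintegral_inner_div_norm_mul_norm [Nontrivial E] (μ : Measure E) [μ.IsAddHaarMeasure]
    (e : E) {f h : ℝ → ENNReal} (hf : Measurable f) (hh : Measurable h) :
    ∫⁻ y, f (⟪e, y⟫ / ‖y‖) * h ‖y‖ ∂μ =
      (∫⁻ s : sphere (0 : E) 1, f ⟪e, (s : E)⟫ ∂μ.toSphere) *
        ∫⁻ t in Ioi (0 : ℝ), ENNReal.ofReal (t ^ (finrank ℝ E - 1)) * h t := by
  rw [lintegral_eq_lintegral_sphere_lintegral_Ioi μ (by fun_prop),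
    ← lintegral_mul_const _ (by fun_prop)]
  refine lintegral_congr fun s => ?_
  rw [← lintegral_const_mul _ (by fun_prop)]
  refine setLIntegral_congr_fun measurableSet_Ioi fun t ht => ?_
  have ht_pos : 0 < t := ht
  have h_norm : ‖t • (s : E)‖ = t := by
    rw [norm_smul, norm_eq_of_mem_sphere, mul_one, Real.norm_of_nonneg ht_pos.le]
  simp only [h_norm, inner_smul_right, mul_div_cancel_left₀ _ ht_pos.ne']
  ring

theorem exists_measurePreserving_axial_coordinates {m : ℕ} (hE : finrank ℝ E = m + 1) {e : E}
    (he : ‖e‖ = 1) :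
    ∃ Φ : ℝ × Eu m → E, MeasurePreserving Φ ∧
      ∀ p, ⟪e, Φ p⟫ = p.1 ∧ ‖Φ p‖ = √(p.1 ^ 2 + ‖p.2‖ ^ 2) := by
  obtain ⟨b, hb⟩ : ∃ b : OrthonormalBasis (Fin (m + 1)) ℝ E, b 0 = e := by
    have h_orthonormal : Orthonormal ℝ (({0} : Set (Fin (m + 1))).domRestrict fun _ => e) := by
      rw [orthonormal_iff_ite]
      intro i j
      simp [Subsingleton.elim i j, he]
    obtain ⟨b, hb⟩ := h_orthonormal.exists_orthonormalBasis_extension_of_card_eq (by simp [hE])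
    exact ⟨b, hb 0 rfl⟩
  refine ⟨fun p => b.repr.symm (WithLp.toLp 2
    ((MeasurableEquiv.piFinSuccAbove (fun _ => ℝ) 0).symm (p.1, WithLp.ofLp p.2))), ?_, ?_⟩
  · have h_cons := (volume_preserving_piFinSuccAbove (fun _ : Fin (m + 1) => ℝ) 0).symm
    have h_ofLp : MeasurePreserving fun p : ℝ × Eu m => (p.1, WithLp.ofLp p.2) :=
      (MeasurePreserving.id volume).prod (PiLp.volume_preserving_ofLp (Fin m))
    exact b.measurePreserving_repr_symm.comp
      ((PiLp.volume_preserving_toLp _).comp (h_cons.comp h_ofLp))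
  · intro p
    constructor
    · rw [← hb, ← b.repr_apply_apply]
      simp [MeasurableEquiv.piFinSuccAbove]
    · rw [LinearIsometryEquiv.norm_map, EuclideanSpace.norm_eq, Fin.sum_univ_succ,
        EuclideanSpace.norm_sq_eq]
      simp [MeasurableEquiv.piFinSuccAbove]

theorem lintegral_inner_norm_eq_lintegral_half_plane {m : ℕ} (hE : finrank ℝ E = m + 2) {e : E}
    (he : ‖e‖ = 1) {F : ℝ × ℝ → ENNReal} (hF : Measurable F) :
    ∫⁻ y : E, F (⟪e, y⟫, ‖y‖) = ENNReal.ofReal (sphereArea (m + 1)) *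
      ∫⁻ a, ∫⁻ t in Ioi (0 : ℝ), ENNReal.ofReal (t ^ m) * F (a, √(a ^ 2 + t ^ 2)) := by
  obtain ⟨Φ, hΦ, hΦ_coord⟩ := exists_measurePreserving_axial_coordinates hE he
  have hG : Measurable fun p : ℝ × ℝ =>
      ENNReal.ofReal (p.2 ^ m) * F (p.1, √(p.1 ^ 2 + p.2 ^ 2)) := by fun_prop
  rw [← hΦ.lintegral_comp (by fun_prop)]
  simp only [hΦ_coord]
  rw [Measure.volume_eq_prod, lintegral_prod _ (by fun_prop),
    ← lintegral_const_mul _ hG.lintegral_prod_right']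
  refine lintegral_congr fun a => ?_
  rw [lintegral_eq_lintegral_sphere_lintegral_Ioi volume (by fun_prop), finrank_euclideanSpace,
    Fintype.card_fin, Nat.add_sub_cancel]
  have h_const : ∀ s : sphere (0 : Eu (m + 1)) 1,
      ∫⁻ t in Ioi (0 : ℝ), ENNReal.ofReal (t ^ m) * F (a, √(a ^ 2 + ‖t • (s : Eu (m + 1))‖ ^ 2)) =
        ∫⁻ t in Ioi (0 : ℝ), ENNReal.ofReal (t ^ m) * F (a, √(a ^ 2 + t ^ 2)) := by
    intro s
    simp only [norm_smul, norm_eq_of_mem_sphere, mul_one, Real.norm_eq_abs, sq_abs]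
  simp only [h_const, lintegral_const]
  rw [toSphere_volume_univ, finrank_euclideanSpace, Fintype.card_fin, mul_comm]

theorem lintegral_half_plane_eq_lintegral_polar {G : ℝ × ℝ → ENNReal} (hG : Measurable G) :
    ∫⁻ a, ∫⁻ t in Ioi (0 : ℝ), G (a, t) =
      ∫⁻ ρ in Ioi (0 : ℝ), ∫⁻ φ in Ioo 0 π, ENNReal.ofReal ρ * G (ρ * cos φ, ρ * sin φ) := by
  set H : ℝ × ℝ → ENNReal := fun p => (Ioi (0 : ℝ)).indicator (fun t => G (p.1, t)) p.2 with hH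
  have hH_meas : Measurable H :=
    hG.indicator (measurable_snd measurableSet_Ioi)
  have hH_polar : Measurable fun p : ℝ × ℝ => ENNReal.ofReal p.1 • H (polarCoord.symm p) := by
    simp only [polarCoord_symm_apply]
    fun_prop
  calc
    ∫⁻ a, ∫⁻ t in Ioi (0 : ℝ), G (a, t) = ∫⁻ p, H p := by
      rw [Measure.volume_eq_prod, lintegral_prod _ hH_meas.aemeasurable]
      simp only [hH, lintegral_indicator measurableSet_Ioi]
    _ = ∫⁻ ρ in Ioi (0 : ℝ), ∫⁻ φ in Ioo (-π) π,
          ENNReal.ofReal ρ • H (ρ * cos φ, ρ * sin φ) := by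
      rw [← lintegral_comp_polarCoord_symm, polarCoord_target, Measure.volume_eq_prod,
        ← Measure.prod_restrict, lintegral_prod _ hH_polar.aemeasurable]
      simp only [polarCoord_symm_apply]
    _ = _ := by
      refine setLIntegral_congr_fun measurableSet_Ioi fun ρ (hρ : 0 < ρ) => ?_
      rw [← inter_eq_left.2 (Ioo_subset_Ioo_left (neg_nonpos.2 pi_pos.le) : Ioo 0 π ⊆ Ioo (-π) π),
        ← setLIntegral_indicator measurableSet_Ioo]
      refine setLIntegral_congr_fun measurableSet_Ioo fun φ hφ => ?_
      have h_mem : ρ * sin φ ∈ Ioi (0 : ℝ) ↔ φ ∈ Ioo 0 π := by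
        refine ⟨fun h => ⟨?_, hφ.2⟩, fun h => mul_pos hρ (Real.sin_pos_of_mem_Ioo h)⟩
        by_contra! hφ_le
        exact (pos_of_mul_pos_right h hρ.le).not_ge
          (Real.sin_nonpos_of_nonpos_of_neg_pi_le hφ_le hφ.1.le)
      by_cases hφ_pos : φ ∈ Ioo 0 π <;>
        simp only [hH, indicator, h_mem, hφ_pos, if_true, if_false, smul_eq_mul, mul_zero]

theorem lintegral_inner_div_norm_mul_norm_eq_lintegral_angle {m : ℕ} (hE : finrank ℝ E = m + 2)
    {e : E} (he : ‖e‖ = 1) {f h : ℝ → ENNReal} (hf : Measurable f) (hh : Measurable h) :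
    ∫⁻ y : E, f (⟪e, y⟫ / ‖y‖) * h ‖y‖ =
      (ENNReal.ofReal (sphereArea (m + 1)) *
        ∫⁻ φ in Ioo 0 π, ENNReal.ofReal (sin φ ^ m) * f (cos φ)) *
        ∫⁻ t in Ioi (0 : ℝ), ENNReal.ofReal (t ^ (m + 1)) * h t := by
  rw [lintegral_inner_norm_eq_lintegral_half_plane hE he (F := fun p => f (p.1 / p.2) * h p.2)
      (by fun_prop),
    lintegral_half_plane_eq_lintegral_polar
      (G := fun p => ENNReal.ofReal (p.2 ^ m) * (f (p.1 / √(p.1 ^ 2 + p.2 ^ 2)) *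
        h √(p.1 ^ 2 + p.2 ^ 2))) (by fun_prop), mul_assoc]
  congr 1
  rw [← lintegral_const_mul _ (by fun_prop)]
  refine setLIntegral_congr_fun measurableSet_Ioi fun ρ (hρ : 0 < ρ) => ?_
  rw [← lintegral_mul_const _ (by fun_prop)]
  refine setLIntegral_congr_fun measurableSet_Ioo fun φ _ => ?_
  have h_sqrt : √((ρ * cos φ) ^ 2 + (ρ * sin φ) ^ 2) = ρ := by
    rw [mul_pow, mul_pow, ← mul_add, Real.cos_sq_add_sin_sq, mul_one, Real.sqrt_sq hρ.le]
  simp only [h_sqrt, mul_div_cancel_left₀ _ hρ.ne', mul_pow _ _ m, pow_succ _ m]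
  rw [ENNReal.ofReal_mul (by positivity), ENNReal.ofReal_mul (by positivity)]
  ring

theorem lintegral_sphere_inner {m : ℕ} (hE : finrank ℝ E = m + 2) {e : E} (he : ‖e‖ = 1)
    {f : ℝ → ENNReal} (hf : Measurable f) :
    ∫⁻ s : sphere (0 : E) 1, f ⟪e, (s : E)⟫ ∂(volume.toSphere) =
      ENNReal.ofReal (sphereArea (m + 1)) *
        ∫⁻ φ in Ioo 0 π, ENNReal.ofReal (sin φ ^ m) * f (cos φ) := by
  have : Nontrivial E := nontrivial_of_finrank_pos (R := ℝ) (by omega)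
  -- Both sides acquire the same radial factor when integrated over `E` against `h ‖y‖`; this
  -- choice of `h` makes that factor equal to one.
  set h : ℝ → ENNReal := (Ioo 0 1).indicator fun t => (ENNReal.ofReal (t ^ (m + 1)))⁻¹ with hh
  have hh_meas : Measurable h := Measurable.indicator (by fun_prop) measurableSet_Ioo
  have h_mass : ∫⁻ t in Ioi (0 : ℝ), ENNReal.ofReal (t ^ (m + 1)) * h t = 1 := by
    calc
      _ = ∫⁻ t in Ioi (0 : ℝ), (Ioo (0 : ℝ) 1).indicator 1 t := by
        refine setLIntegral_congr_fun measurableSet_Ioi fun t ht => ?_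
        have h_pos : 0 < t ^ (m + 1) := pow_pos ht _
        by_cases ht1 : t ∈ Ioo 0 1
        · simp [hh, ht1, ENNReal.mul_inv_cancel, h_pos]
        · simp [hh, ht1]
      _ = 1 := by
        rw [lintegral_indicator_one measurableSet_Ioo, Measure.restrict_apply measurableSet_Ioo,
          inter_eq_left.2 Ioo_subset_Ioi_self]
        simp
  have h_eq := lintegral_inner_div_norm_mul_norm volume e hf hh_meas
  rw [lintegral_inner_div_norm_mul_norm_eq_lintegral_angle hE he hf hh_meas,
    show finrank ℝ E - 1 = m + 1 by omega, h_mass, mul_one, mul_one] at h_eq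
  exact h_eq.symm

theorem map_inner_toSphere {m : ℕ} (hE : finrank ℝ E = m + 2) {e : E} (he : ‖e‖ = 1) :
    (volume : Measure E).toSphere.map (fun s : sphere (0 : E) 1 => ⟪e, (s : E)⟫) =
      ENNReal.ofReal (sphereArea (m + 1)) •
        ((volume.restrict (Ioo 0 π)).withDensity fun φ => ENNReal.ofReal (sin φ ^ m)).map cos := by
  refine Measure.ext_of_lintegral _ fun f hf => ?_
  rw [lintegral_map hf (by fun_prop), lintegral_sphere_inner hE he hf, lintegral_smul_measure,
    lintegral_map hf (by fun_prop),
    lintegral_withDensity_eq_lintegral_mul _ (by fun_prop) (by fun_prop)]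
  rfl

theorem sphereArea_pos {n : ℕ} (hn : 0 < n) : 0 < sphereArea n := by
  have : 0 < Real.Gamma ((n : ℝ) / 2) := Real.Gamma_pos_of_pos (by positivity)
  unfold sphereArea
  positivity

theorem integral_sphere_inner {F : Type*} [NormedAddCommGroup F] [NormedSpace ℝ F] {m : ℕ}
    (hE : finrank ℝ E = m + 2) {e : E} (he : ‖e‖ = 1) {f : ℝ → F} (hf : StronglyMeasurable f) :
    ∫ s : sphere (0 : E) 1, f ⟪e, (s : E)⟫ ∂(volume.toSphere) =
      sphereArea (m + 1) • ∫ φ in Ioo 0 π, sin φ ^ m • f (cos φ) := by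
  rw [← integral_map (φ := fun s : sphere (0 : E) 1 => ⟪e, (s : E)⟫) (by fun_prop)
      hf.aestronglyMeasurable,
    map_inner_toSphere hE he, integral_smul_measure,
    ENNReal.toReal_ofReal (sphereArea_pos m.succ_pos).le,
    integral_map (by fun_prop) hf.aestronglyMeasurable,
    integral_withDensity_eq_integral_toReal_smul (by fun_prop) (by simp)]
  congr 1
  refine setIntegral_congr_fun measurableSet_Ioo fun φ hφ => ?_
  simp only [ENNReal.toReal_ofReal (pow_nonneg (Real.sin_pos_of_mem_Ioo hφ).le m)]

end PolarCoordinates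

section ChordSubstitution

open Set

theorem cos_two_mul_arctan (t : ℝ) : cos (2 * arctan t) = (1 - t ^ 2) / (1 + t ^ 2) := by
  rw [Real.cos_two_mul, Real.cos_sq_arctan]
  field_simp
  ring

theorem sin_two_mul_arctan (t : ℝ) : sin (2 * arctan t) = 2 * t / (1 + t ^ 2) := by
  rw [Real.sin_two_mul, Real.sin_arctan, Real.cos_arctan]
  field_simp
  rw [Real.sq_sqrt (by positivity)]

section ScaledTangent

variable {k : ℝ}

theorem injOn_two_mul_arctan_mul_tan (hk : k ≠ 0) :
    InjOn (fun θ => 2 * arctan (k * tan θ)) (Ioo 0 (π / 2)) := by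
  have h_tan : InjOn tan (Ioo 0 (π / 2)) :=
    Real.injOn_tan.mono (Ioo_subset_Ioo_left (by linarith [pi_pos]))
  exact (((mul_right_injective₀ two_ne_zero).comp Real.arctan_injective).comp
    (mul_right_injective₀ hk)).comp_injOn h_tan

theorem image_two_mul_arctan_mul_tan_Ioo (hk : 0 < k) :
    (fun θ => 2 * arctan (k * tan θ)) '' Ioo 0 (π / 2) = Ioo 0 π := by
  refine Subset.antisymm ?_ fun φ hφ => ?_
  · rintro _ ⟨θ, hθ, rfl⟩
    have h_tan : 0 < tan θ := Real.tan_pos_of_pos_of_lt_pi_div_two hθ.1 hθ.2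
    have h_pos : 0 < arctan (k * tan θ) := Real.arctan_pos.2 (mul_pos hk h_tan)
    have h_lt := Real.arctan_lt_pi_div_two (k * tan θ)
    exact ⟨by linarith, by linarith⟩
  · have h_tan : 0 < tan (φ / 2) :=
      Real.tan_pos_of_pos_of_lt_pi_div_two (by linarith [hφ.1]) (by linarith [hφ.2])
    refine ⟨arctan (k⁻¹ * tan (φ / 2)),
      ⟨Real.arctan_pos.2 (by positivity), Real.arctan_lt_pi_div_two _⟩, ?_⟩
    simp only [Real.tan_arctan, mul_inv_cancel_left₀ hk.ne']
    rw [Real.arctan_tan (by linarith [hφ.1, pi_pos]) (by linarith [hφ.2]),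
      mul_div_cancel₀ φ two_ne_zero]

theorem hasDerivAt_two_mul_arctan_mul_tan {θ : ℝ} (hθ : cos θ ≠ 0) :
    HasDerivAt (fun θ => 2 * arctan (k * tan θ))
      (2 * k / (cos θ ^ 2 + k ^ 2 * sin θ ^ 2)) θ := by
  refine (((Real.hasDerivAt_tan hθ).const_mul k).arctan.const_mul 2).congr_deriv ?_
  rw [Real.tan_eq_sin_div_cos]
  field_simp

theorem integral_Ioo_pi_eq_integral_comp_two_mul_arctan_mul_tan {F : Type*}
    [NormedAddCommGroup F] [NormedSpace ℝ F] (hk : 0 < k) (f : ℝ → F) :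
    ∫ φ in Ioo 0 π, f φ = ∫ θ in Ioo 0 (π / 2),
      (2 * k / (cos θ ^ 2 + k ^ 2 * sin θ ^ 2)) • f (2 * arctan (k * tan θ)) := by
  rw [← image_two_mul_arctan_mul_tan_Ioo hk,
    integral_image_eq_integral_abs_deriv_smul measurableSet_Ioo
      (fun θ hθ => (hasDerivAt_two_mul_arctan_mul_tan
        (Real.cos_pos_of_mem_Ioo ⟨by linarith [hθ.1, pi_pos], hθ.2⟩).ne').hasDerivWithinAt)
      (injOn_two_mul_arctan_mul_tan hk.ne')]
  refine setIntegral_congr_fun measurableSet_Ioo fun θ _ => ?_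
  simp only [abs_of_nonneg (show 0 ≤ 2 * k / (cos θ ^ 2 + k ^ 2 * sin θ ^ 2) by positivity)]

end ScaledTangent

/-- The distance from a point `x` with `|x| = r < 1` to the second intersection with the unit
sphere of the line through `x` and `y`, where `y` is a point of the sphere at polar angle `φ`
from `x` and `tan (φ / 2) = (1 - r) / (1 + r) * tan θ`. By the intersecting chords theorem it
is `(1 - r ^ 2) / |y - x|`. -/
def oppositeChord (r θ : ℝ) : ℝ := √((1 + r) ^ 2 * cos θ ^ 2 + (1 - r) ^ 2 * sin θ ^ 2)

/-- `|y - x| ^ n * |∇ₓ P(x, y)|` for the Poisson kernel `P(x, y) = (1 - |x| ^ 2) / |y - x| ^ n`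
and `|y| = 1`, as a function of `r = |x|` and of the opposite chord `v = (1 - r ^ 2) / |y - x|`. -/
def gradAmplitude (n : ℕ) (r v : ℝ) : ℝ :=
  √(4 * r ^ 2 + 2 * n * (1 - r ^ 2) + n * (n - 2) * v ^ 2)

@[fun_prop]
theorem continuous_gradAmplitude (n : ℕ) (r : ℝ) : Continuous (gradAmplitude n r) := by
  unfold gradAmplitude
  fun_prop

section Chord

variable {r θ : ℝ}

theorem sq_oppositeChord (r θ : ℝ) :
    oppositeChord r θ ^ 2 = (1 + r) ^ 2 * cos θ ^ 2 + (1 - r) ^ 2 * sin θ ^ 2 :=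
  Real.sq_sqrt (by positivity)

theorem oppositeChord_pos (hr : |r| < 1) : 0 < oppositeChord r θ := by
  obtain ⟨h_lower, h_upper⟩ := abs_lt.1 hr
  refine Real.sqrt_pos.2 ?_
  have h_add : 0 < (1 + r) ^ 2 := by nlinarith
  have h_sub : 0 < (1 - r) ^ 2 := by nlinarith
  rcases eq_or_ne (cos θ) 0 with h_cos | h_cos
  · have h_sin : sin θ ^ 2 = 1 := by rw [Real.sin_sq, h_cos]; ring
    rw [h_cos, h_sin]
    linarith
  · positivity

theorem gradAmplitude_oppositeChord (n : ℕ) (r θ : ℝ) :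
    gradAmplitude n r (oppositeChord r θ) =
      √((n - (n - 2) * r) ^ 2 + 4 * n * (n - 2) * r * cos θ ^ 2) := by
  rw [gradAmplitude, sq_oppositeChord, Real.sin_sq]
  ring_nf

theorem one_add_sq_mul_tan (hr : 1 + r ≠ 0) (hθ : cos θ ≠ 0) :
    1 + ((1 - r) / (1 + r) * tan θ) ^ 2 = (oppositeChord r θ / ((1 + r) * cos θ)) ^ 2 := by
  rw [div_pow, sq_oppositeChord, Real.tan_eq_sin_div_cos]
  field_simp

theorem sin_two_mul_arctan_mul_tan (hr : 1 + r ≠ 0) (hθ : cos θ ≠ 0) :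
    sin (2 * arctan ((1 - r) / (1 + r) * tan θ)) =
      2 * (1 - r ^ 2) * (sin θ * cos θ) / oppositeChord r θ ^ 2 := by
  rw [sin_two_mul_arctan, one_add_sq_mul_tan hr hθ, Real.tan_eq_sin_div_cos]
  field_simp
  ring

theorem one_sub_two_mul_cos_add_sq (hr : |r| < 1) (hθ : cos θ ≠ 0) :
    1 - 2 * r * cos (2 * arctan ((1 - r) / (1 + r) * tan θ)) + r ^ 2 =
      ((1 - r ^ 2) / oppositeChord r θ) ^ 2 := by
  have hr_add : 1 + r ≠ 0 := by linarith [(abs_lt.1 hr).1]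
  have hV : oppositeChord r θ ≠ 0 := (oppositeChord_pos hr).ne'
  rw [cos_two_mul_arctan, one_add_sq_mul_tan hr_add hθ, Real.tan_eq_sin_div_cos]
  field_simp
  rw [sq_oppositeChord]
  linear_combination (1 - r ^ 2) ^ 2 * Real.sin_sq_add_cos_sq θ

end Chord

end ChordSubstitution

section PoissonKernelGradient

variable {E : Type*} [NormedAddCommGroup E]

/-- The Poisson kernel of the unit ball without its normalising constant; `n` is the dimension
of the space in the classical case. -/
def ballPoissonKernel (n : ℕ) (y x : E) : ℝ := (1 - ‖x‖ ^ 2) / ‖y - x‖ ^ n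

@[fun_prop]
theorem measurable_ballPoissonKernel_left [MeasurableSpace E] [BorelSpace E] (n : ℕ) (x : E) :
    Measurable fun y => ballPoissonKernel n y x := by
  unfold ballPoissonKernel
  fun_prop

variable [InnerProductSpace ℝ E]

/-- The gradient of `ballPoissonKernel n y x` in the interior variable `x`. -/
def ballPoissonKernelGrad (n : ℕ) (y x : E) : E :=
  -(2 / ‖y - x‖ ^ n) • x + (n * (1 - ‖x‖ ^ 2) / ‖y - x‖ ^ (n + 2)) • (y - x)

theorem hasFDerivAt_norm_sub_left {y x : E} (h : y ≠ x) :
    HasFDerivAt (fun z => ‖y - z‖) (-(‖y - x‖⁻¹ • innerSL ℝ (y - x))) x := by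
  have h_norm : ‖y - x‖ ≠ 0 := norm_ne_zero_iff.2 (sub_ne_zero.2 h)
  have h_sqrt := ((hasFDerivAt_id x).const_sub y).norm_sq.sqrt (pow_ne_zero 2 h_norm)
  simp only [id, Real.sqrt_sq (norm_nonneg _)] at h_sqrt
  refine h_sqrt.congr_fderiv ?_
  ext w
  simp only [_root_.smul_apply, ContinuousLinearMap.comp_apply, _root_.neg_apply,
    ContinuousLinearMap.id_apply, innerSL_apply_apply, inner_neg_right, smul_eq_mul, nsmul_eq_mul]
  field_simp
  norm_num

theorem hasFDerivAt_ballPoissonKernel (n : ℕ) {y x : E} (h : y ≠ x) :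
    HasFDerivAt (ballPoissonKernel n y) (innerSL ℝ (ballPoissonKernelGrad n y x)) x := by
  have h_norm : ‖y - x‖ ≠ 0 := norm_ne_zero_iff.2 (sub_ne_zero.2 h)
  have h_numerator : HasFDerivAt (fun z : E => 1 - ‖z‖ ^ 2) (-(2 • innerSL ℝ x)) x :=
    (hasStrictFDerivAt_norm_sq x).hasFDerivAt.const_sub 1
  have h_inv_pow : HasDerivAt (fun t : ℝ => (t ^ n)⁻¹)
      (-(n * ‖y - x‖ ^ (n - 1)) / (‖y - x‖ ^ n) ^ 2) ‖y - x‖ :=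
    (hasDerivAt_pow n ‖y - x‖).fun_inv (pow_ne_zero n h_norm)
  refine (h_numerator.mul (h_inv_pow.comp_hasFDerivAt x
    (hasFDerivAt_norm_sub_left h))).congr_fderiv ?_
  ext w
  simp only [ballPoissonKernelGrad, _root_.add_apply, _root_.smul_apply, _root_.neg_apply,
    innerSL_apply_apply, smul_eq_mul, Function.comp, inner_add_left, inner_smul_left,
    nsmul_eq_mul, RCLike.conj_to_real]
  rcases n with _ | n
  · simp
  · simp only [Nat.add_sub_cancel, pow_succ]
    field_simp
    push_cast
    ring

theorem norm_ballPoissonKernelGrad (n : ℕ) {y x : E} (hy : ‖y‖ = 1) (h : y ≠ x) :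
    ‖ballPoissonKernelGrad n y x‖ =
      gradAmplitude n ‖x‖ ((1 - ‖x‖ ^ 2) / ‖y - x‖) / ‖y - x‖ ^ n := by
  have h_pos : 0 < ‖y - x‖ := norm_pos_iff.2 (sub_ne_zero.2 h)
  have h_inner : ⟪x, y - x⟫ = (1 - ‖x‖ ^ 2 - ‖y - x‖ ^ 2) / 2 := by
    rw [norm_sub_sq_real, hy, inner_sub_right, real_inner_self_eq_norm_sq, real_inner_comm]
    ring
  have h_sq : (‖y - x‖ ^ n * ‖ballPoissonKernelGrad n y x‖) ^ 2 =
      4 * ‖x‖ ^ 2 + 2 * n * (1 - ‖x‖ ^ 2) +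
        n * (n - 2) * ((1 - ‖x‖ ^ 2) / ‖y - x‖) ^ 2 := by
    rw [mul_pow, ballPoissonKernelGrad, norm_add_sq_real, inner_smul_left, inner_smul_right,
      h_inner, norm_smul, norm_smul, mul_pow, mul_pow, Real.norm_eq_abs, Real.norm_eq_abs, sq_abs,
      sq_abs]
    simp only [RCLike.conj_to_real, pow_succ _ (n + 1), pow_succ _ n]
    field_simp
    ring
  rw [gradAmplitude, ← h_sq, Real.sqrt_sq (by positivity)]
  field_simp

theorem norm_ballPoissonKernelGrad_le (n : ℕ) {y x : E} {ε : ℝ} (hε : 0 < ε) (hy : ‖y‖ = 1)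
    (hx : ‖x‖ ≤ 1 - ε) : ‖ballPoissonKernelGrad n y x‖ ≤ 2 / ε ^ n + n / ε ^ (n + 1) := by
  have hx_one : ‖x‖ ≤ 1 := by linarith
  have hx_sq : ‖x‖ ^ 2 ≤ 1 := pow_le_one₀ (norm_nonneg x) hx_one
  have h_dist : ε ≤ ‖y - x‖ := by linarith [norm_sub_norm_le y x]
  have h_pos : 0 < ‖y - x‖ := hε.trans_le h_dist
  have : 0 ≤ 1 - ‖x‖ ^ 2 := by linarith
  refine (norm_add_le _ _).trans (add_le_add ?_ ?_)
  · calc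
      ‖-(2 / ‖y - x‖ ^ n) • x‖ = 2 / ‖y - x‖ ^ n * ‖x‖ := by
        rw [norm_smul, norm_neg, Real.norm_of_nonneg (by positivity)]
      _ ≤ 2 / ε ^ n * 1 := by gcongr
      _ = 2 / ε ^ n := mul_one _
  · calc
      ‖(n * (1 - ‖x‖ ^ 2) / ‖y - x‖ ^ (n + 2)) • (y - x)‖ =
          n * (1 - ‖x‖ ^ 2) / ‖y - x‖ ^ (n + 1) := by
        rw [norm_smul, Real.norm_of_nonneg (by positivity), pow_succ _ (n + 1)]
        field_simp
      _ ≤ n * 1 / ε ^ (n + 1) := by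
        gcongr
        linarith [sq_nonneg ‖x‖]
      _ = n / ε ^ (n + 1) := by rw [mul_one]

variable [MeasurableSpace E] [BorelSpace E] [SecondCountableTopology E]

@[fun_prop]
theorem measurable_ballPoissonKernelGrad_left (n : ℕ) (x : E) :
    Measurable fun y => ballPoissonKernelGrad n y x := by
  unfold ballPoissonKernelGrad
  fun_prop

theorem integrable_ballPoissonKernelGrad (n : ℕ) (μ : Measure (sphere (0 : E) 1))
    [IsFiniteMeasure μ] {x : E} (hx : ‖x‖ < 1) :
    Integrable (fun y : sphere (0 : E) 1 => ballPoissonKernelGrad n (y : E) x) μ :=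
  .of_bound (Measurable.aestronglyMeasurable (by fun_prop)) _ <| .of_forall fun y =>
    norm_ballPoissonKernelGrad_le n (sub_pos.2 hx) (norm_eq_of_mem_sphere y) (by linarith)

end PoissonKernelGradient

section PoissonIntegral

variable {E F : Type*} [NormedAddCommGroup E] [MeasurableSpace E] [BorelSpace E]
  [NormedAddCommGroup F] [NormedSpace ℝ F]
  {μ : Measure (sphere (0 : E) 1)} {g : sphere (0 : E) 1 → F} {x : E}

theorem integrable_ballPoissonKernel_smul (n : ℕ) (hg : Integrable g μ) (hx : ‖x‖ < 1) :
    Integrable (fun y : sphere (0 : E) 1 => ballPoissonKernel n (y : E) x • g y) μ := by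
  have hx_sq : ‖x‖ ^ 2 ≤ 1 := pow_le_one₀ (norm_nonneg x) hx.le
  refine hg.bdd_smul (1 / (1 - ‖x‖) ^ n) (Measurable.aestronglyMeasurable (by fun_prop))
    (.of_forall fun y => ?_)
  have h_dist : 1 - ‖x‖ ≤ ‖(y : E) - x‖ := by
    simpa only [norm_eq_of_mem_sphere] using norm_sub_norm_le (y : E) x
  have : 0 < 1 - ‖x‖ := sub_pos.2 hx
  rw [ballPoissonKernel, Real.norm_of_nonneg (div_nonneg (sub_nonneg.2 hx_sq) (by positivity))]
  gcongr
  linarith [sq_nonneg ‖x‖]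

variable [InnerProductSpace ℝ E] [SecondCountableTopology E]

theorem integrable_ballPoissonKernelGrad_smulRight (n : ℕ) (hg : Integrable g μ) (hx : ‖x‖ < 1) :
    Integrable (fun y : sphere (0 : E) 1 =>
      (innerSL ℝ (ballPoissonKernelGrad n (y : E) x)).smulRight (g y)) μ := by
  have h_grad : AEStronglyMeasurable (fun y : sphere (0 : E) 1 =>
      innerSL ℝ (ballPoissonKernelGrad n (y : E) x)) μ :=
    (innerSL ℝ).continuous.comp_aestronglyMeasurable
      (Measurable.aestronglyMeasurable (by fun_prop))
  refine (hg.norm.const_mul (2 / (1 - ‖x‖) ^ n + n / (1 - ‖x‖) ^ (n + 1))).mono'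
    ((ContinuousLinearMap.smulRightL ℝ E F).aestronglyMeasurable_comp₂ h_grad
      hg.aestronglyMeasurable) (.of_forall fun y => ?_)
  rw [ContinuousLinearMap.norm_smulRight_apply, innerSL_apply_norm]
  gcongr
  exact norm_ballPoissonKernelGrad_le n (sub_pos.2 hx) (norm_eq_of_mem_sphere y) (by linarith)

theorem hasFDerivAt_integral_ballPoissonKernel_smul (n : ℕ) (hg : Integrable g μ) (hx : ‖x‖ < 1) :
    HasFDerivAt (fun z => ∫ y : sphere (0 : E) 1, ballPoissonKernel n (y : E) z • g y ∂μ)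
      (∫ y : sphere (0 : E) 1, (innerSL ℝ (ballPoissonKernelGrad n (y : E) x)).smulRight (g y) ∂μ)
      x := by
  set ε := (1 - ‖x‖) / 2 with hε
  have hε_pos : 0 < ε := by linarith
  have h_ball : ∀ z ∈ ball x ε, ‖z‖ ≤ 1 - ε := by
    intro z hz
    linarith [mem_ball_iff_norm.1 hz, norm_le_norm_add_norm_sub' z x]
  refine hasFDerivAt_integral_of_dominated_of_fderiv_le
    (F := fun z (y : sphere (0 : E) 1) => ballPoissonKernel n (y : E) z • g y)
    (F' := fun z (y : sphere (0 : E) 1) =>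
      (innerSL ℝ (ballPoissonKernelGrad n (y : E) z)).smulRight (g y))
    (bound := fun y => (2 / ε ^ n + n / ε ^ (n + 1)) * ‖g y‖) (ball_mem_nhds x hε_pos)
    (.of_forall fun z => ?_) (integrable_ballPoissonKernel_smul n hg hx)
    (integrable_ballPoissonKernelGrad_smulRight n hg hx).aestronglyMeasurable
    (.of_forall fun y z hz => ?_) (hg.norm.const_mul _) (.of_forall fun y z hz => ?_)
  · exact AEStronglyMeasurable.smul (Measurable.aestronglyMeasurable (by fun_prop))
      hg.aestronglyMeasurable
  · rw [ContinuousLinearMap.norm_smulRight_apply, innerSL_apply_norm]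
    gcongr
    exact norm_ballPoissonKernelGrad_le n hε_pos (norm_eq_of_mem_sphere y) (h_ball z hz)
  · have h_ne : (y : E) ≠ z := by
      rintro rfl
      linarith [h_ball _ hz, norm_eq_of_mem_sphere y]
    exact (hasFDerivAt_ballPoissonKernel n h_ne).smul_const (g y)

end PoissonIntegral

section Divergence

variable {n : ℕ}

theorem divg_eq_trace_of_hasFDerivAt {u : Eu n → Eu n} {u' : Eu n →L[ℝ] Eu n} {x : Eu n}
    (hu : HasFDerivAt u u' x) : divg u x = LinearMap.trace ℝ (Eu n) u' := by
  rw [LinearMap.trace_eq_sum_inner _ (EuclideanSpace.basisFun (Fin n) ℝ), divg]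
  refine Finset.sum_congr rfl fun j _ => ?_
  have h_coord : HasFDerivAt (fun y => u y j) ((EuclideanSpace.proj j).comp u') x :=
    (EuclideanSpace.proj j : Eu n →L[ℝ] ℝ).hasFDerivAt.comp x hu
  rw [h_coord.fderiv]
  simp [EuclideanSpace.inner_single_left]

theorem hasFDerivAt_poissonBallV {m : ℕ} {g : sphere (0 : Eu n) 1 → Eu m}
    (hg : Integrable g volume.toSphere) {x : Eu n} (hx : ‖x‖ < 1) :
    HasFDerivAt (poissonBallV g)
      ((1 / sphereArea n) • ∫ y : sphere (0 : Eu n) 1,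
        (innerSL ℝ (ballPoissonKernelGrad n (y : Eu n) x)).smulRight (g y) ∂(volume.toSphere)) x :=
  (hasFDerivAt_integral_ballPoissonKernel_smul n hg hx).const_smul (1 / sphereArea n)

theorem divg_poissonBallV {g : sphere (0 : Eu n) 1 → Eu n}
    (hg : Integrable g volume.toSphere) {x : Eu n} (hx : ‖x‖ < 1) :
    divg (poissonBallV g) x = ∫ y : sphere (0 : Eu n) 1,
      ⟪(1 / sphereArea n) • ballPoissonKernelGrad n (y : Eu n) x, g y⟫ ∂(volume.toSphere) := by
  let traceCLM : (Eu n →L[ℝ] Eu n) →L[ℝ] ℝ :=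
    LinearMap.toContinuousLinearMap (LinearMap.trace ℝ (Eu n) ∘ₗ ContinuousLinearMap.coeLM ℝ)
  have h_trace : ∀ v w : Eu n, traceCLM ((innerSL ℝ v).smulRight w) = ⟪v, w⟫ := fun v w =>
    LinearMap.trace_smulRight (innerSL ℝ v : Eu n →ₗ[ℝ] ℝ) w
  calc
    divg (poissonBallV g) x = traceCLM ((1 / sphereArea n) • ∫ y : sphere (0 : Eu n) 1,
        (innerSL ℝ (ballPoissonKernelGrad n (y : Eu n) x)).smulRight (g y) ∂(volume.toSphere)) :=
      divg_eq_trace_of_hasFDerivAt (hasFDerivAt_poissonBallV hg hx)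
    _ = _ := by
      rw [map_smul, ← traceCLM.integral_comp_comm
        (integrable_ballPoissonKernelGrad_smulRight n hg hx), ← integral_smul]
      simp only [h_trace, real_inner_smul_left, smul_eq_mul]

end Divergence

section SharpCoefficient

open Set

variable {r : ℝ}

theorem Tcoef_add_two (m : ℕ) (hr : |r| < 1) :
    Tcoef (m + 2) r = 2 ^ (m + 1) * sphereArea (m + 1) / (sphereArea (m + 2) * (1 - r ^ 2)) *
      ∫ θ in 0..π / 2, gradAmplitude (m + 2) r (oppositeChord r θ) *
        (sin θ * cos θ / oppositeChord r θ) ^ m := by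
  have h_add : 0 < 1 + r := by linarith [(abs_lt.1 hr).1]
  have h_sub : 0 < 1 - r := by linarith [(abs_lt.1 hr).2]
  have h_integral : ∫ θ in 0..π / 2,
      √(((m + 2 : ℕ) - ((m + 2 : ℕ) - 2) * r) ^ 2 +
        4 * (m + 2 : ℕ) * ((m + 2 : ℕ) - 2) * r * cos θ ^ 2) * sin θ ^ m /
        (1 + ((1 - r) / (1 + r)) ^ 2 * tan θ ^ 2) ^ ((((m + 2 : ℕ) : ℝ) - 2) / 2) =
      (1 + r) ^ m * ∫ θ in 0..π / 2, gradAmplitude (m + 2) r (oppositeChord r θ) *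
        (sin θ * cos θ / oppositeChord r θ) ^ m := by
    rw [← intervalIntegral.integral_const_mul]
    refine intervalIntegral.integral_congr_Ioo_of_le (by positivity) fun θ hθ => ?_
    have h_cos : 0 < cos θ := Real.cos_pos_of_mem_Ioo ⟨by linarith [hθ.1, pi_pos], hθ.2⟩
    have h_chord : 0 < oppositeChord r θ := oppositeChord_pos hr
    have h_exponent : (((m + 2 : ℕ) : ℝ) - 2) / 2 = 1 / 2 * m := by push_cast; ring
    rw [← mul_pow, one_add_sq_mul_tan h_add.ne' h_cos.ne', h_exponent,
      Real.rpow_mul (by positivity), ← Real.sqrt_eq_rpow, Real.sqrt_sq (by positivity),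
      Real.rpow_natCast, gradAmplitude_oppositeChord]
    simp only [div_pow, mul_pow]
    field_simp
  rw [Tcoef, Nat.add_sub_cancel, h_integral]
  simp only [Nat.add_one_sub_one]
  have := (sphereArea_pos (show 0 < m + 2 by positivity)).ne'
  have : 1 - r ^ 2 ≠ 0 := by nlinarith
  field_simp
  ring

theorem integral_sin_pow_mul_gradAmplitude (m : ℕ) (hr : |r| < 1) :
    ∫ φ in Ioo 0 π, sin φ ^ m *
        (gradAmplitude (m + 2) r ((1 - r ^ 2) / √(1 - 2 * r * cos φ + r ^ 2)) /
          √(1 - 2 * r * cos φ + r ^ 2) ^ (m + 2)) =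
      2 ^ (m + 1) / (1 - r ^ 2) * ∫ θ in 0..π / 2,
        gradAmplitude (m + 2) r (oppositeChord r θ) * (sin θ * cos θ / oppositeChord r θ) ^ m := by
  have h_add : 0 < 1 + r := by linarith [(abs_lt.1 hr).1]
  have h_sub : 0 < 1 - r := by linarith [(abs_lt.1 hr).2]
  have h_sq : 0 < 1 - r ^ 2 := by nlinarith
  rw [integral_Ioo_pi_eq_integral_comp_two_mul_arctan_mul_tan (div_pos h_sub h_add),
    intervalIntegral.integral_of_le (by positivity), integral_Ioc_eq_integral_Ioo,
    ← integral_const_mul]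
  refine setIntegral_congr_fun measurableSet_Ioo fun θ hθ => ?_
  have h_cos : cos θ ≠ 0 := (Real.cos_pos_of_mem_Ioo ⟨by linarith [hθ.1, pi_pos], hθ.2⟩).ne'
  have h_chord : 0 < oppositeChord r θ := oppositeChord_pos hr
  have h_jacobian : 2 * ((1 - r) / (1 + r)) / (cos θ ^ 2 + ((1 - r) / (1 + r)) ^ 2 * sin θ ^ 2) =
      2 * (1 - r ^ 2) / oppositeChord r θ ^ 2 := by
    rw [div_eq_div_iff (by positivity) (by positivity), sq_oppositeChord]
    field_simp
    ring
  simp only [h_jacobian, one_sub_two_mul_cos_add_sq hr h_cos,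
    sin_two_mul_arctan_mul_tan h_add.ne' h_cos, smul_eq_mul]
  rw [Real.sqrt_sq (by positivity), div_div_cancel₀ h_sq.ne']
  simp only [div_pow, mul_pow, pow_succ]
  field_simp
  rw [one_pow, mul_one]

theorem exists_norm_eq_one_and_eq_norm_smul {E : Type*} [NormedAddCommGroup E] [NormedSpace ℝ E]
    [Nontrivial E] (x : E) : ∃ e : E, ‖e‖ = 1 ∧ x = ‖x‖ • e := by
  rcases eq_or_ne x 0 with rfl | hx
  · obtain ⟨e, he⟩ := exists_norm_eq E zero_le_one
    exact ⟨e, he, by simp⟩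
  · exact ⟨‖x‖⁻¹ • x, norm_smul_inv_norm hx, (smul_inv_smul₀ (norm_ne_zero_iff.2 hx) x).symm⟩

theorem norm_sub_smul_eq_sqrt {E : Type*} [NormedAddCommGroup E] [InnerProductSpace ℝ E]
    {y e : E} (hy : ‖y‖ = 1) (he : ‖e‖ = 1) (r : ℝ) :
    ‖y - r • e‖ = √(1 - 2 * r * ⟪e, y⟫ + r ^ 2) := by
  rw [← Real.sqrt_sq (norm_nonneg (y - r • e)), norm_sub_sq_real, hy, real_inner_smul_right,
    real_inner_comm, norm_smul, he, mul_one, Real.norm_eq_abs, sq_abs]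
  ring_nf

theorem integral_norm_ballPoissonKernelGrad {m : ℕ} {x : Eu (m + 2)} (hx : ‖x‖ < 1) :
    ∫ y : sphere (0 : Eu (m + 2)) 1,
      ‖(1 / sphereArea (m + 2)) • ballPoissonKernelGrad (m + 2) (y : Eu (m + 2)) x‖
        ∂(volume.toSphere) = Tcoef (m + 2) ‖x‖ := by
  obtain ⟨e, he, hxe⟩ := exists_norm_eq_one_and_eq_norm_smul x
  have hr : |‖x‖| < 1 := by rwa [abs_norm]
  let f : ℝ → ℝ := fun t =>
    gradAmplitude (m + 2) ‖x‖ ((1 - ‖x‖ ^ 2) / √(1 - 2 * ‖x‖ * t + ‖x‖ ^ 2)) /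
      √(1 - 2 * ‖x‖ * t + ‖x‖ ^ 2) ^ (m + 2)
  have h_zonal : ∀ y : sphere (0 : Eu (m + 2)) 1,
      ‖ballPoissonKernelGrad (m + 2) (y : Eu (m + 2)) x‖ = f ⟪e, (y : Eu (m + 2))⟫ := by
    intro y
    have hy : ‖(y : Eu (m + 2))‖ = 1 := norm_eq_of_mem_sphere y
    have h_ne : (y : Eu (m + 2)) ≠ x := by
      rintro rfl
      exact hx.ne hy
    have h_dist : ‖(y : Eu (m + 2)) - x‖ = √(1 - 2 * ‖x‖ * ⟪e, (y : Eu (m + 2))⟫ + ‖x‖ ^ 2) := by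
      conv_lhs => rw [hxe]
      exact norm_sub_smul_eq_sqrt hy he ‖x‖
    rw [norm_ballPoissonKernelGrad _ hy h_ne, h_dist]
  have hf : StronglyMeasurable f := Measurable.stronglyMeasurable (by fun_prop)
  have h_area : 0 < sphereArea (m + 2) := sphereArea_pos (by positivity)
  simp only [norm_smul, h_zonal, Real.norm_of_nonneg (one_div_pos.2 h_area).le]
  rw [integral_const_mul, integral_sphere_inner finrank_euclideanSpace_fin he hf]
  simp only [smul_eq_mul, f]
  rw [integral_sin_pow_mul_gradAmplitude m hr, Tcoef_add_two m hr]
  have : 1 - ‖x‖ ^ 2 ≠ 0 := by nlinarith [norm_nonneg x]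
  field_simp

end SharpCoefficient

section Duality

theorem isLeast_abs_integral_inner {α E : Type*} [MeasurableSpace α] {μ : Measure α}
    [NormedAddCommGroup E] [InnerProductSpace ℝ E] [MeasurableSpace E] [BorelSpace E]
    [SecondCountableTopology E] {G : α → E} (hG_meas : Measurable G) (hG : Integrable G μ) :
    IsLeast {c : ℝ | ∀ g : α → E, Measurable g → (∀ᵐ y ∂μ, ‖g y‖ ≤ 1) →
      |∫ y, ⟪G y, g y⟫ ∂μ| ≤ c} (∫ y, ‖G y‖ ∂μ) := by
  refine ⟨fun g _ hg => ?_, fun c hc => ?_⟩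
  · refine norm_integral_le_of_norm_le (f := fun y => ⟪G y, g y⟫) hG.norm (hg.mono fun y hy => ?_)
    calc
      ‖⟪G y, g y⟫‖ ≤ ‖G y‖ * ‖g y‖ := norm_inner_le_norm _ _
      _ ≤ ‖G y‖ := mul_le_of_le_one_right (norm_nonneg _) hy
  · have h_extremal : ∀ y, ⟪G y, ‖G y‖⁻¹ • G y⟫ = ‖G y‖ := fun y => by
      rw [real_inner_smul_right, real_inner_self_eq_norm_mul_norm, ← mul_assoc,
        inv_mul_mul_self]
    have h_bound := hc (fun y => ‖G y‖⁻¹ • G y) (by fun_prop) (.of_forall fun y => by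
      rw [norm_smul, norm_inv, norm_norm]
      exact inv_mul_le_one)
    simp only [h_extremal] at h_bound
    exact (le_abs_self _).trans h_bound

end Duality

section LowDimensions

theorem sphereArea_one : sphereArea 1 = 2 := by
  rw [sphereArea, Nat.cast_one, Real.Gamma_one_half_eq, Real.sqrt_eq_rpow]
  field_simp

theorem sphereArea_two : sphereArea 2 = 2 * π := by
  norm_num [sphereArea]

theorem sphereArea_three : sphereArea 3 = 4 * π := by
  rw [sphereArea, show ((3 : ℕ) : ℝ) / 2 = 1 / 2 + 1 by norm_num,
    Real.Gamma_add_one (by norm_num), Real.Gamma_one_half_eq, Real.rpow_add pi_pos,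
    Real.sqrt_eq_rpow, Real.rpow_one]
  field_simp
  norm_num

variable {r : ℝ}

theorem Tcoef_two (hr : |r| < 1) : Tcoef 2 r = 2 / (1 - r ^ 2) := by
  have h_amplitude : ∀ v, gradAmplitude 2 r v = 2 := fun v => by
    rw [gradAmplitude, Real.sqrt_eq_iff_mul_self_eq_of_pos two_pos]
    push_cast
    ring
  rw [Tcoef_add_two 0 hr, sphereArea_one, sphereArea_two]
  simp only [h_amplitude, pow_zero, mul_one, intervalIntegral.integral_const, sub_zero, smul_eq_mul]
  field_simp
  norm_num

theorem hasDerivAt_primitive_sqrt_add_mul_sq {a b v : ℝ} (ha : 0 < a) (hb : 0 < b) :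
    HasDerivAt (fun v => v / 2 * √(a + b * v ^ 2) +
      a / (2 * √b) * log (√b * v + √(a + b * v ^ 2))) (√(a + b * v ^ 2)) v := by
  have h_radicand : 0 < a + b * v ^ 2 := by positivity
  have h_sqrt : HasDerivAt (fun v => √(a + b * v ^ 2)) (b * v / √(a + b * v ^ 2)) v := by
    refine ((((hasDerivAt_pow 2 v).const_mul b).const_add a).sqrt h_radicand.ne').congr_deriv ?_
    field_simp
    norm_num
  have h_arg : 0 < √b * v + √(a + b * v ^ 2) := by
    have h_abs : √b * |v| < √(a + b * v ^ 2) := by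
      rw [← Real.sqrt_sq_eq_abs, ← Real.sqrt_mul hb.le]
      exact Real.sqrt_lt_sqrt (by positivity) (by linarith)
    nlinarith [neg_abs_le v, Real.sqrt_nonneg b]
  refine ((((hasDerivAt_id v).div_const 2).mul h_sqrt).add
    ((((hasDerivAt_id v).const_mul √b).add h_sqrt).log h_arg.ne' |>.const_mul
      (a / (2 * √b)))).congr_deriv ?_
  have h_log : (√b * 1 + b * v / √(a + b * v ^ 2)) / (√b * v + √(a + b * v ^ 2)) =
      √b / √(a + b * v ^ 2) := by
    field_simp
    linear_combination -v * Real.sq_sqrt hb.le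
  simp only [id, Pi.add_apply, h_log]
  field_simp
  linear_combination -Real.sq_sqrt h_radicand.le

theorem integral_gradAmplitude_three (hr : |r| < 1) :
    ∫ v in (1 - r)..(1 + r), gradAmplitude 3 r v =
      4 * r + (3 - r ^ 2) / √3 * log ((√3 + r) / (√3 - r)) := by
  obtain ⟨h_lower, h_upper⟩ := abs_lt.1 hr
  have h_three : √3 ^ 2 = (3 : ℝ) := Real.sq_sqrt (by norm_num)
  have h_one_lt : 1 < √(3 : ℝ) := Real.lt_sqrt_of_sq_lt (by norm_num)
  have h_add : 0 < √3 + r := by linarith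
  have h_sub : 0 < √3 - r := by linarith
  have h_radicand : ∀ v, gradAmplitude 3 r v = √(6 - 2 * r ^ 2 + 3 * v ^ 2) := fun v => by
    rw [gradAmplitude]
    congr 1
    push_cast
    ring
  have h_at_add : √(6 - 2 * r ^ 2 + 3 * (1 + r) ^ 2) = 3 + r := by
    rw [show 6 - 2 * r ^ 2 + 3 * (1 + r) ^ 2 = (3 + r) ^ 2 by ring, Real.sqrt_sq (by linarith)]
  have h_at_sub : √(6 - 2 * r ^ 2 + 3 * (1 - r) ^ 2) = 3 - r := by
    rw [show 6 - 2 * r ^ 2 + 3 * (1 - r) ^ 2 = (3 - r) ^ 2 by ring, Real.sqrt_sq (by linarith)]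
  have h_log_add : √3 * (1 + r) + (3 + r) = (1 + √3) * (√3 + r) := by
    linear_combination -h_three
  have h_log_sub : √3 * (1 - r) + (3 - r) = (1 + √3) * (√3 - r) := by
    linear_combination -h_three
  rw [intervalIntegral.integral_eq_sub_of_hasDerivAt (fun v _ => (h_radicand v).symm ▸
    hasDerivAt_primitive_sqrt_add_mul_sq (by nlinarith) three_pos)
    ((continuous_gradAmplitude 3 r).intervalIntegrable _ _), h_at_add, h_at_sub, h_log_add,
    h_log_sub, Real.log_mul (by positivity) h_add.ne', Real.log_mul (by positivity) h_sub.ne',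
    Real.log_div h_add.ne' h_sub.ne']
  field_simp
  ring

theorem hasDerivAt_oppositeChord (hr : |r| < 1) (θ : ℝ) :
    HasDerivAt (oppositeChord r) (-(4 * r) * (sin θ * cos θ / oppositeChord r θ)) θ := by
  have h_chord : 0 < oppositeChord r θ := oppositeChord_pos hr
  have h_radicand := Real.sqrt_pos.1 h_chord
  refine (((((Real.hasDerivAt_cos θ).pow 2).const_mul ((1 + r) ^ 2)).add
    (((Real.hasDerivAt_sin θ).pow 2).const_mul ((1 - r) ^ 2))).sqrt
      h_radicand.ne').congr_deriv ?_
  change _ / (2 * oppositeChord r θ) = _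
  field_simp
  norm_num
  ring

theorem oppositeChord_zero (hr : -1 ≤ r) : oppositeChord r 0 = 1 + r := by
  simp [oppositeChord, Real.sqrt_sq (show 0 ≤ 1 + r by linarith)]

theorem oppositeChord_pi_div_two (hr : r ≤ 1) : oppositeChord r (π / 2) = 1 - r := by
  simp [oppositeChord, Real.sqrt_sq (sub_nonneg.2 hr)]

theorem integral_comp_oppositeChord (hr : |r| < 1) (hr_ne : r ≠ 0) {f : ℝ → ℝ}
    (hf : Continuous f) :
    ∫ θ in 0..π / 2, f (oppositeChord r θ) * (sin θ * cos θ / oppositeChord r θ) =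
      1 / (4 * r) * ∫ v in (1 - r)..(1 + r), f v := by
  have h_cont : Continuous (oppositeChord r) := by
    unfold oppositeChord
    fun_prop
  have h_ne : ∀ θ, oppositeChord r θ ≠ 0 := fun θ => (oppositeChord_pos hr).ne'
  have h_subst := intervalIntegral.integral_comp_mul_deriv (a := 0) (b := π / 2)
    (fun θ _ => hasDerivAt_oppositeChord hr θ)
    (Continuous.continuousOn (by fun_prop (disch := assumption))) hf
  rw [oppositeChord_zero (abs_lt.1 hr).1.le, oppositeChord_pi_div_two (abs_lt.1 hr).2.le,
    intervalIntegral.integral_symm (1 - r), ← neg_eq_iff_eq_neg] at h_subst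
  rw [← h_subst, ← intervalIntegral.integral_neg,
    ← intervalIntegral.integral_const_mul]
  congr 1 with θ
  simp only [Function.comp]
  field_simp

theorem Tcoef_three (hr : |r| < 1) (hr_ne : r ≠ 0) :
    Tcoef 3 r = 1 / (1 - r ^ 2) *
      (2 + (3 - r ^ 2) / (2 * √3 * r) * log ((√3 + r) / (√3 - r))) := by
  rw [Tcoef_add_two 1 hr, sphereArea_two, sphereArea_three]
  simp only [pow_one, Nat.reduceAdd]
  rw [integral_comp_oppositeChord hr hr_ne (continuous_gradAmplitude 3 r),
    integral_gradAmplitude_three hr]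
  field_simp
  ring

end LowDimensions

/-- For `n ≥ 2` and `x` in the open unit ball `𝔹 ⊂ ℝⁿ`, the smallest
constant `c` such that `|div u(x)| ≤ c ‖g‖_{[L^∞(S^{n-1})]^n}` for every Poisson
integral `u` of `g ∈ [L^∞(S^{n-1})]^n` (equivalently, such that `|div u(x)| ≤ c`
whenever `‖g‖_∞ ≤ 1`) equals `𝒯_n(x)`. In particular `𝒯_2(x) = 2/(1-r²)` and
`𝒯_3(x) = (1/(1-r²))(2 + ((3-r²)/(2√3 r)) ln((√3+r)/(√3-r)))` (the latter for `r > 0`). -/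
theorem sharp_divergence_coefficient_ball
    (n : ℕ) (hn : 2 ≤ n) (x : Eu n) (hx : x ∈ Metric.ball (0 : Eu n) 1) :
    IsLeast {c : ℝ |
        ∀ g : Metric.sphere (0 : Eu n) 1 → Eu n, Measurable g →
          (∀ᵐ y ∂((volume : Measure (Eu n)).toSphere), ‖g y‖ ≤ 1) →
          |divg (poissonBallV g) x| ≤ c}
      (Tcoef n ‖x‖)
    ∧ (∀ r : ℝ, 0 ≤ r → r < 1 → Tcoef 2 r = 2 / (1 - r ^ 2))
    ∧ (∀ r : ℝ, 0 < r → r < 1 →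
        Tcoef 3 r = (1 / (1 - r ^ 2)) *
          (2 + ((3 - r ^ 2) / (2 * Real.sqrt 3 * r)) *
            Real.log ((Real.sqrt 3 + r) / (Real.sqrt 3 - r)))) := by
  refine ⟨?_, fun r hr hr_lt => Tcoef_two (abs_lt.2 ⟨by linarith, hr_lt⟩),
    fun r hr hr_lt => Tcoef_three (abs_lt.2 ⟨by linarith, hr_lt⟩) hr.ne'⟩
  obtain ⟨m, rfl⟩ := Nat.exists_eq_add_of_le' hn
  have hx_lt : ‖x‖ < 1 := mem_ball_zero_iff.1 hx
  have h_integrable : Integrable (fun y : sphere (0 : Eu (m + 2)) 1 =>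
      (1 / sphereArea (m + 2)) • ballPoissonKernelGrad (m + 2) (y : Eu (m + 2)) x)
      volume.toSphere := (integrable_ballPoissonKernelGrad (m + 2) _ hx_lt).fun_smul _
  have h_dual := isLeast_abs_integral_inner (by fun_prop) h_integrable
  rw [integral_norm_ballPoissonKernelGrad hx_lt] at h_dual
  convert h_dual using 7 with c g hg hg_le
  rw [divg_poissonBallV (.of_bound hg.aestronglyMeasurable 1 hg_le) hx_lt]
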